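/- Let Φ be an Orlicz function with 1 < p_Φ ≤ q_Φ < ∞, let d ≥ 1, and let f : 𝕋 → M_d(ℂ) be a function with entrywise integrable entries such that ∫_𝕋 Tr Φ(|f(z)|) dm(z) < ∞ and whose Fourier coefficients satisfy f̂(k) = 0 for all integers k < 0. Then for every ε > 0 there exist functions g, h : 𝕋 → M_d(ℂ) with entrywise integrable entries satisfying ĝ(k) = 0 and ĥ(k) = 0 for all k < 0, such that f(z) = g(z) h(z) for m-almost every z ∈ 𝕋 and max{ ∫_𝕋 Tr Φ(g(z)* g(z)) dm(z), ∫_𝕋 Tr Φ(h(z) h(z)*) dm(z) } ≤ ∫_𝕋 Tr Φ(|f(z)|) dm(z) + ε. -/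

import Mathlib

/-!
The factorization comes from an explicit modulus and a unitary correction. Let
`w = max (|f|, δ)` by functional calculus, with `δ > 0` so small that `d Φ(δ) ≤ ε`, and put
`a = w ^ (1/2)`, `b = w ^ (-1/2)`. Since `f` is integrable and `w ≥ δ`, the functions `a`, `b` and
`f b` are square integrable, and `f = (f b) a`. For any unitary valued `Θ` the functions
`g = f b Θ` and `h = Θᴴ a` satisfy `f = g h`; moreover `gᴴ g` is unitarily equivalent to
`|f|² / w ≤ |f|` and `h hᴴ` to `w`, so that `Tr Φ(gᴴ g) ≤ Tr Φ(|f|)` and, because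
`Φ(max (s, δ)) ≤ Φ(s) + Φ(δ)`, also `Tr Φ(h hᴴ) ≤ Tr Φ(|f|) + d Φ(δ)`.

It remains to choose `Θ` so that `g` and `h` are analytic (`exists_unitary_factor`). In
`L²(𝕋; ℂᵈ)` let `M` be the closed span of the `z ^ m a e_j`, `m ≥ 0`. The components of the `a e_j`
orthogonal to `z M` are linearly independent, as one sees by pairing with the conjugated rows of
`b`, so the wandering subspace `M ⊖ z M` contains `d` orthonormal vectors, the columns of `Θ`.
Pointwise inner products of elements of `M ⊖ z M` have vanishing nonzero Fourier coefficients,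
hence are constant by uniqueness of Fourier coefficients in `L¹`, so `Θ` is unitary almost
everywhere. The columns of `Θ` being orthogonal to `z M` says that `Θᴴ a` is analytic. Analyticity
of `f = (f b) a` says that the conjugated rows of `f b` are orthogonal to `z M`, which contains
`z ^ m` times the columns of `Θ` for `m ≥ 1`; so `f b Θ` is analytic too.
-/

open MeasureTheory Filter Set Finset Matrix ProbabilityTheory
open scoped ENNReal

/-- An Orlicz function: continuous, increasing and convex on `[0, ∞)`, vanishing at `0`
and tending to `∞` at `∞`. -/
structure IsOrliczFunction (Φ : ℝ → ℝ) : Prop where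
  continuousOn : ContinuousOn Φ (Set.Ici 0)
  monotoneOn : MonotoneOn Φ (Set.Ici 0)
  convexOn : ConvexOn ℝ (Set.Ici 0) Φ
  map_zero : Φ 0 = 0
  tendsto_atTop : Filter.Tendsto Φ Filter.atTop Filter.atTop

/-- Concrete form of the lower Matuszewska–Orlicz index condition `p < p_Φ`:
`∫₀ᵗ Φ(s) s^(−p−1) ds ≤ C₀ t^(−p) Φ(t)` for all `t > 0`. -/
def OrliczLowerIndex (Φ : ℝ → ℝ) (p C₀ : ℝ) : Prop :=
  ∀ t : ℝ, 0 < t → (∫ s in Set.Ioo (0 : ℝ) t, Φ s * s ^ (-p - 1)) ≤ C₀ * t ^ (-p) * Φ t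

/-- Concrete form of the upper Matuszewska–Orlicz index condition `q_Φ < q`:
`∫ₜ^∞ Φ(s) s^(−q−1) ds ≤ C₀ t^(−q) Φ(t)` for all `t > 0`. -/
def OrliczUpperIndex (Φ : ℝ → ℝ) (q C₀ : ℝ) : Prop :=
  ∀ t : ℝ, 0 < t → (∫ s in Set.Ioi t, Φ s * s ^ (-q - 1)) ≤ C₀ * t ^ (-q) * Φ t

/-- For a Hermitian matrix `B`, `Tr Φ(B) = Σᵢ Φ(λᵢ(B))` (functional calculus on the
eigenvalues); junk value `0` if `B` is not Hermitian. -/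
noncomputable def trPhiHerm (Φ : ℝ → ℝ) {d : ℕ} (B : Matrix (Fin d) (Fin d) ℂ) : ℝ :=
  letI := Classical.propDecidable B.IsHermitian
  if hB : B.IsHermitian then ∑ i, Φ (hB.eigenvalues i) else 0

/-- For a positive semidefinite matrix `B`, `Tr Φ(B^(1/2)) = Σᵢ Φ(√λᵢ(B))`;
junk value `0` if `B` is not Hermitian. -/
noncomputable def trPhiSqrt (Φ : ℝ → ℝ) {d : ℕ} (B : Matrix (Fin d) (Fin d) ℂ) : ℝ :=
  letI := Classical.propDecidable B.IsHermitian
  if hB : B.IsHermitian then ∑ i, Φ (Real.sqrt (hB.eigenvalues i)) else 0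

/-- `Tr Φ(|A|) = Σᵢ Φ(sᵢ(A))` where `sᵢ(A)` are the singular values of `A`,
i.e. the square roots of the eigenvalues of `Aᴴ * A`. -/
noncomputable def trPhiAbs (Φ : ℝ → ℝ) {d : ℕ} (A : Matrix (Fin d) (Fin d) ℂ) : ℝ :=
  trPhiSqrt Φ (Aᴴ * A)

instance : Fact (0 < 2 * Real.pi) := ⟨Real.two_pi_pos⟩

section Wandering

variable {𝕜 E ι : Type*} [RCLike 𝕜] [NormedAddCommGroup E] [InnerProductSpace 𝕜 E]

/-- The smallest closed subspace that contains the family `a` and is invariant under `V`. -/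
noncomputable def invariantSpan (V : E →L[𝕜] E) (a : ι → E) : Submodule 𝕜 E :=
  (Submodule.span 𝕜 (Set.range fun p : ℕ × ι => (V ^ p.1) (a p.2))).topologicalClosure

lemma pow_apply_mem_invariantSpan (V : E →L[𝕜] E) (a : ι → E) (m : ℕ) (j : ι) :
    (V ^ m) (a j) ∈ invariantSpan V a :=
  Submodule.le_topologicalClosure _ (Submodule.subset_span ⟨(m, j), rfl⟩)

lemma apply_mem_invariantSpan (V : E →L[𝕜] E) (a : ι → E) (j : ι) :
    a j ∈ invariantSpan V a := by
  simpa using pow_apply_mem_invariantSpan V a 0 j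

lemma map_invariantSpan_le_iff {V : E →L[𝕜] E} {a : ι → E} {K : Submodule 𝕜 E}
    (hK : IsClosed (K : Set E)) :
    (invariantSpan V a).map (V : E →ₗ[𝕜] E) ≤ K ↔ ∀ m j, (V ^ (m + 1)) (a j) ∈ K := by
  simp only [pow_succ', mul_apply_eq_comp]
  refine ⟨fun h m j => h (Submodule.mem_map_of_mem (pow_apply_mem_invariantSpan V a m j)),
    fun h => ?_⟩
  refine (Submodule.topologicalClosure_map V _).trans (Submodule.topologicalClosure_minimal _ ?_ hK)
  rw [Submodule.map_span_le]
  rintro _ ⟨⟨m, j⟩, rfl⟩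
  exact h m j

lemma map_invariantSpan_le (V : E →L[𝕜] E) (a : ι → E) :
    (invariantSpan V a).map (V : E →ₗ[𝕜] E) ≤ invariantSpan V a :=
  (map_invariantSpan_le_iff (Submodule.isClosed_topologicalClosure _)).mpr fun m j =>
    pow_apply_mem_invariantSpan V a (m + 1) j

lemma mem_orthogonal_map_invariantSpan_iff {V : E →L[𝕜] E} {a : ι → E} {x : E} :
    x ∈ ((invariantSpan V a).map (V : E →ₗ[𝕜] E))ᗮ ↔
      ∀ m j, inner 𝕜 x ((V ^ (m + 1)) (a j)) = 0 := by
  simp only [← Submodule.mem_orthogonal_singleton_iff_inner_right,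
    ← map_invariantSpan_le_iff (Submodule.isClosed_orthogonal _)]
  rw [← Submodule.span_singleton_le_iff_mem]
  exact Submodule.isOrtho_comm

lemma inner_pow_succ_apply_eq_zero {V : E →L[𝕜] E} {M : Submodule 𝕜 E}
    (hM : M.map (V : E →ₗ[𝕜] E) ≤ M) {x y : E} (hx : x ∈ (M.map (V : E →ₗ[𝕜] E))ᗮ) (hy : y ∈ M)
    (m : ℕ) : inner 𝕜 x ((V ^ (m + 1)) y) = 0 := by
  have hpow : (V ^ m) y ∈ M := by
    induction m with
    | zero => simpa using hy
    | succ m ih =>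
      rw [pow_succ']
      exact hM (Submodule.mem_map_of_mem ih)
  rw [pow_succ', mul_apply_eq_comp]
  exact Submodule.inner_left_of_mem_orthogonal (Submodule.mem_map_of_mem hpow) hx

lemma exists_orthonormal_mem_span [Finite ι] {v : ι → E} (hv : LinearIndependent 𝕜 v) :
    ∃ θ : ι → E, Orthonormal 𝕜 θ ∧ ∀ j, θ j ∈ Submodule.span 𝕜 (Set.range v) := by
  have := Fintype.ofFinite ι
  have := FiniteDimensional.span_of_finite 𝕜 (Set.finite_range v)
  let e : Fin (Module.finrank 𝕜 (Submodule.span 𝕜 (Set.range v))) ≃ ι :=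
    Fintype.equivOfCardEq (by simp [finrank_span_eq_card hv])
  let B := (stdOrthonormalBasis 𝕜 (Submodule.span 𝕜 (Set.range v))).reindex e
  exact ⟨fun j => B j, B.orthonormal.comp_linearIsometry (Submodule.subtypeₗᵢ _),
    fun j => (B j).2⟩

/-- The components of the `a j` orthogonal to `N` are still biorthogonal to `y`, hence linearly
independent. -/
lemma exists_orthonormal_of_biorthogonal [CompleteSpace E] [Finite ι] [DecidableEq ι]
    {M N : Submodule 𝕜 E} (hM : IsClosed (M : Set E)) (hNM : N ≤ M) {a y : ι → E}
    (ha : ∀ j, a j ∈ M) (hy : ∀ i, y i ∈ Nᗮ)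
    (hya : ∀ i j, inner 𝕜 (y i) (a j) = (1 : Matrix ι ι 𝕜) i j) :
    ∃ θ : ι → E, Orthonormal 𝕜 θ ∧ ∀ j, θ j ∈ M ⊓ Nᗮ := by
  have := Fintype.ofFinite ι
  set P := (Nᗮ).starProjection
  have hsub : ∀ j, a j - P (a j) ∈ Nᗮᗮ := fun j => Submodule.sub_starProjection_mem_orthogonal _
  have hNM' : Nᗮᗮ ≤ M := by
    rw [Submodule.orthogonal_orthogonal_eq_closure]
    exact Submodule.topologicalClosure_minimal _ hNM hM
  have hPM : ∀ j, P (a j) ∈ M ⊓ Nᗮ := fun j =>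
    ⟨by simpa using M.sub_mem (ha j) (hNM' (hsub j)), Submodule.starProjection_apply_mem _ _⟩
  have hyP : ∀ i j, inner 𝕜 (y i) (P (a j)) = (1 : Matrix ι ι 𝕜) i j := fun i j => by
    rw [← hya, eq_comm, ← sub_eq_zero, ← inner_sub_right]
    exact Submodule.inner_right_of_mem_orthogonal (hy i) (hsub j)
  have hli : LinearIndependent 𝕜 fun j => P (a j) := by
    rw [Fintype.linearIndependent_iff]
    intro c hc i
    have h0 : inner 𝕜 (y i) (∑ j, c j • P (a j)) = 0 := by rw [hc, inner_zero_right]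
    simpa [inner_sum, inner_smul_right, hyP, Matrix.one_apply] using h0
  obtain ⟨θ, hθ, hmem⟩ := exists_orthonormal_mem_span hli
  refine ⟨θ, hθ, fun j => Submodule.span_le.mpr ?_ (hmem j)⟩
  rintro _ ⟨j, rfl⟩
  exact hPM j

end Wandering

section FourierUniqueness

variable {T : ℝ} [hT : Fact (0 < T)] {E : Type*} [NormedAddCommGroup E] [NormedSpace ℂ E]

open AddCircle

lemma ae_eq_zero_of_forall_integral_continuousMap_smul_eq_zero {X : Type*} [TopologicalSpace X]
    [CompactSpace X] [HasOuterApproxClosed X] [MeasurableSpace X] [BorelSpace X] {μ : Measure X}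
    [CompleteSpace E] {F : X → E} (hF : Integrable F μ)
    (h : ∀ u : C(X, ℂ), ∫ t, u t • F t ∂μ = 0) : F =ᵐ[μ] 0 := by
  refine ae_eq_zero_of_forall_setIntegral_isClosed_eq_zero hF fun s hs => ?_
  let u (k : ℕ) : C(X, ℂ) :=
    ⟨fun t => ((hs.apprSeq k t : ℝ) : ℂ), by
      have := (hs.apprSeq k).continuous
      fun_prop⟩
  have hu_norm (k : ℕ) (t : X) : ‖u k t‖ ≤ 1 := by
    simpa [u] using HasOuterApproxClosed.apprSeq_apply_le_one hs k t
  have hu_lim (t : X) : Tendsto (fun k => u k t • F t) atTop (nhds (s.indicator F t)) := by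
    have h1 := tendsto_pi_nhds.mp (HasOuterApproxClosed.tendsto_apprSeq hs) t
    have h2 := ((Complex.continuous_ofReal.comp NNReal.continuous_coe).tendsto _).comp h1
    by_cases hts : t ∈ s <;> simpa [hts, u] using h2.smul_const (F t)
  have hlim : Tendsto (fun k => ∫ t, u k t • F t ∂μ) atTop (nhds (∫ t, s.indicator F t ∂μ)) := by
    refine tendsto_integral_of_dominated_convergence (fun t => ‖F t‖)
      (fun k => (u k).continuous.aestronglyMeasurable.smul hF.1) hF.norm
      (fun k => .of_forall fun t => ?_) (.of_forall hu_lim)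
    rw [norm_smul]
    exact mul_le_of_le_one_left (norm_nonneg _) (hu_norm k t)
  rw [← integral_indicator hs.measurableSet]
  exact tendsto_nhds_unique hlim (by simp [h])

lemma integral_continuousMap_smul_eq_zero_of_fourierCoeff [CompleteSpace E] {F : AddCircle T → E}
    (hF : Integrable F haarAddCircle) (h : ∀ k, fourierCoeff F k = 0) (u : C(AddCircle T, ℂ)) :
    ∫ t, u t • F t ∂haarAddCircle = 0 := by
  let L : C(AddCircle T, ℂ) →L[ℂ] E :=
    ((ContinuousLinearMap.lsmul ℂ ℂ).lpPairing haarAddCircle ⊤ 1).flip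
      (memLp_one_iff_integrable.mpr hF).toLp ∘L ContinuousMap.toLp ⊤ haarAddCircle ℂ
  have hL (u : C(AddCircle T, ℂ)) : L u = ∫ t, u t • F t ∂haarAddCircle := by
    refine ((ContinuousLinearMap.lsmul ℂ ℂ).lpPairing_eq_integral (p := ⊤) (q := 1)
      (ContinuousMap.toLp ⊤ haarAddCircle ℂ u) (memLp_one_iff_integrable.mpr hF).toLp).trans
      (integral_congr_ae ?_)
    filter_upwards [ContinuousMap.coeFn_toLp (p := ⊤) (𝕜 := ℂ) haarAddCircle u,
      (memLp_one_iff_integrable.mpr hF).coeFn_toLp] with t hu hFt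
    rw [hu, hFt, ContinuousLinearMap.lsmul_apply]
  have hker : Submodule.span ℂ (Set.range (fourier (T := T))) ≤ L.ker := by
    rw [Submodule.span_le]
    rintro _ ⟨k, rfl⟩
    simpa [hL, fourierCoeff] using h (-k)
  have htop := Submodule.topologicalClosure_minimal _ hker L.isClosed_ker
  rw [span_fourier_closure_eq_top] at htop
  rw [← hL]
  exact htop (Submodule.mem_top (x := u))

lemma ae_eq_of_fourierCoeff_eq [CompleteSpace E] {F G : AddCircle T → E}
    (hF : Integrable F haarAddCircle) (hG : Integrable G haarAddCircle)
    (h : fourierCoeff F = fourierCoeff G) : F =ᵐ[haarAddCircle] G := by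
  have hsub : ∀ k, fourierCoeff (F - G) k = 0 := fun k => by
    simp only [fourierCoeff, Pi.sub_apply, smul_sub]
    rw [integral_sub (hF.fourier_smul _) (hG.fourier_smul _)]
    exact sub_eq_zero.mpr (congrFun h k)
  filter_upwards [ae_eq_zero_of_forall_integral_continuousMap_smul_eq_zero (hF.sub hG)
    (integral_continuousMap_smul_eq_zero_of_fourierCoeff (hF.sub hG) hsub)] with t ht
  exact sub_eq_zero.mp ht

lemma fourierCoeff_const [CompleteSpace E] (c : E) :
    fourierCoeff (fun _ : AddCircle T => c) = Pi.single 0 c := by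
  ext k
  have hk := congrFun (fourierCoeff_fourier (T := T) 0) k
  simp only [fourierCoeff, smul_eq_mul, fourier_zero, mul_one] at hk
  rw [fourierCoeff, integral_smul_const, hk]
  by_cases h : k = 0 <;> simp [h]

lemma fourierCoeff_star (F : AddCircle T → ℂ) (k : ℤ) :
    fourierCoeff (fun t => star (F t)) k = star (fourierCoeff F (-k)) := by
  simp [fourierCoeff, ← integral_conj]

end FourierUniqueness

section Columns

variable {α m n k : Type*} [MeasurableSpace α] {μ : Measure α} {p : ℝ≥0∞}

/-- The entries of the matrix function `A` belong to `L^p(μ)`. -/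
def EntriesMemLp (A : α → Matrix m n ℂ) (p : ℝ≥0∞) (μ : Measure α) : Prop :=
  ∀ i j, MemLp (fun t => A t i j) p μ

namespace EntriesMemLp

lemma conjTranspose {A : α → Matrix m n ℂ} (hA : EntriesMemLp A p μ) :
    EntriesMemLp (fun t => (A t)ᴴ) p μ := fun i j => (hA j i).star

lemma integrable_mul [Fintype n] {A : α → Matrix m n ℂ} {B : α → Matrix n k ℂ}
    (hA : EntriesMemLp A 2 μ) (hB : EntriesMemLp B 2 μ) (i : m) (j : k) :
    Integrable (fun t => (A t * B t) i j) μ := by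
  simp only [Matrix.mul_apply]
  exact integrable_finsetSum _ fun l _ => (hA i l).integrable_mul (hB l j)

lemma memLp_column [Fintype m] {A : α → Matrix m n ℂ} (hA : EntriesMemLp A p μ) (j : n) :
    MemLp (fun t => WithLp.toLp 2 fun i => A t i j) p μ :=
  MemLp.of_eval_piLp fun i => hA i j

/-- The `j`-th column of a matrix function, as an element of `L^p(μ; ℂ^m)`. -/
noncomputable def column [Fintype m] {A : α → Matrix m n ℂ} (hA : EntriesMemLp A p μ) (j : n) :
    Lp (EuclideanSpace ℂ m) p μ := (hA.memLp_column j).toLp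

lemma coeFn_column [Fintype m] {A : α → Matrix m n ℂ} (hA : EntriesMemLp A p μ) (j : n) :
    hA.column j =ᵐ[μ] fun t => WithLp.toLp 2 fun i => A t i j := MemLp.coeFn_toLp _

lemma inner_column_ae_eq [Fintype m] {A : α → Matrix m n ℂ} {B : α → Matrix m k ℂ}
    (hA : EntriesMemLp A p μ) (hB : EntriesMemLp B p μ) (i : n) (j : k) :
    (fun t => inner ℂ (hA.column i t) (hB.column j t)) =ᵐ[μ] fun t => ((A t)ᴴ * B t) i j := by
  filter_upwards [hA.coeFn_column i, hB.coeFn_column j] with t hAt hBt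
  simp [hAt, hBt, PiLp.inner_apply, Matrix.mul_apply, mul_comm]

end EntriesMemLp

lemma exists_column_eq [Fintype m] (θ : n → Lp (EuclideanSpace ℂ m) p μ) :
    ∃ (Θ : α → Matrix m n ℂ) (hΘ : EntriesMemLp Θ p μ), hΘ.column = θ := by
  have hΘ : EntriesMemLp (fun t => Matrix.of fun i j => θ j t i) p μ := fun i j =>
    (Lp.memLp (θ j)).eval_piLp i
  exact ⟨_, hΘ, funext fun j => Lp.ext (hΘ.coeFn_column j)⟩

end Columns

section Shift

open AddCircle

variable {T : ℝ} [hT : Fact (0 < T)]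

section NormedSpace

variable {E : Type*} [NormedAddCommGroup E] [NormedSpace ℂ E] {p : ℝ≥0∞} [Fact (1 ≤ p)]

variable (T E p) in
/-- Multiplication by the coordinate `z = fourier 1` of the circle, on `L^p(𝕋; E)`. -/
noncomputable def shift : Lp E p (haarAddCircle (T := T)) →L[ℂ] Lp E p (haarAddCircle (T := T)) :=
  (ContinuousLinearMap.lsmul ℂ ℂ).holderL haarAddCircle ⊤ p p (fourierLp ⊤ 1)

lemma coeFn_shift (x : Lp E p (haarAddCircle (T := T))) :
    shift T E p x =ᵐ[haarAddCircle] fun t => fourier 1 t • x t := by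
  filter_upwards [ContinuousLinearMap.coeFn_holder (r := p) (ContinuousLinearMap.lsmul ℂ ℂ)
    (fourierLp (T := T) ⊤ 1) x, coeFn_fourierLp (T := T) ⊤ 1] with t ht hz
  rw [← hz]
  exact ht

lemma coeFn_shift_pow (m : ℕ) (x : Lp E p (haarAddCircle (T := T))) :
    (shift T E p ^ m) x =ᵐ[haarAddCircle] fun t => fourier m t • x t := by
  induction m with
  | zero => simp
  | succ m ih =>
    rw [pow_succ', mul_apply_eq_comp]
    filter_upwards [coeFn_shift ((shift T E p ^ m) x), ih] with t hs hm
    rw [hs, hm, smul_smul, ← fourier_add, add_comm, Nat.cast_succ]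

end NormedSpace

lemma inner_shift_pow {E : Type*} [NormedAddCommGroup E] [InnerProductSpace ℂ E] (m : ℕ)
    (x y : Lp E 2 (haarAddCircle (T := T))) :
    inner ℂ x ((shift T E 2 ^ m) y) = fourierCoeff (fun t => inner ℂ (x t) (y t)) (-m) := by
  rw [L2.inner_def, fourierCoeff, neg_neg]
  refine integral_congr_ae ?_
  filter_upwards [coeFn_shift_pow m y] with t ht
  rw [ht, inner_smul_right, smul_eq_mul]

variable {m n k : Type*}

/-- The Fourier coefficients of negative index of the matrix function `F` vanish. -/
def EntriesAnalytic (F : AddCircle T → Matrix m n ℂ) : Prop :=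
  ∀ k : ℤ, k < 0 → ∀ i j, fourierCoeff (fun t => F t i j) k = 0

lemma inner_column_shift_pow [Fintype m] {A : AddCircle T → Matrix m n ℂ}
    {B : AddCircle T → Matrix m k ℂ} (hA : EntriesMemLp A 2 haarAddCircle)
    (hB : EntriesMemLp B 2 haarAddCircle) (l : ℕ) (i : n) (j : k) :
    inner ℂ (hA.column i) ((shift T _ 2 ^ l) (hB.column j)) =
      fourierCoeff (fun t => ((A t)ᴴ * B t) i j) (-l) := by
  rw [inner_shift_pow, fourierCoeff_congr_ae (hA.inner_column_ae_eq hB i j)]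

lemma entriesAnalytic_conjTranspose_mul_iff [Fintype m] {A : AddCircle T → Matrix m n ℂ}
    {B : AddCircle T → Matrix m k ℂ} (hA : EntriesMemLp A 2 haarAddCircle)
    (hB : EntriesMemLp B 2 haarAddCircle) :
    EntriesAnalytic (fun t => (A t)ᴴ * B t) ↔
      ∀ l i j, inner ℂ (hA.column i) ((shift T _ 2 ^ (l + 1)) (hB.column j)) = 0 := by
  simp only [inner_column_shift_pow]
  refine ⟨fun h l => h _ (by lia), fun h l hl => ?_⟩
  obtain ⟨l, rfl⟩ := Int.eq_negSucc_of_lt_zero hl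
  exact h l

lemma ae_conjTranspose_mul_self_eq_one [Fintype m] [Finite n] [DecidableEq n]
    {Θ : AddCircle T → Matrix m n ℂ} (hΘ : EntriesMemLp Θ 2 haarAddCircle)
    (horth : Orthonormal ℂ hΘ.column) (hanalytic : EntriesAnalytic fun t => (Θ t)ᴴ * Θ t) :
    ∀ᵐ t ∂haarAddCircle (T := T), (Θ t)ᴴ * Θ t = 1 := by
  have hcoeff : ∀ i j, fourierCoeff (fun t => ((Θ t)ᴴ * Θ t) i j) =
      fourierCoeff fun _ : AddCircle T => (1 : Matrix n n ℂ) i j := by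
    intro i j
    ext l
    rw [fourierCoeff_const]
    rcases lt_trichotomy l 0 with hl | rfl | hl
    · rw [hanalytic l hl, Pi.single_eq_of_ne hl.ne]
    · simpa [orthonormal_iff_ite.mp horth, Matrix.one_apply] using
        (inner_column_shift_pow hΘ hΘ 0 i j).symm
    · have hstar : ∀ t, ((Θ t)ᴴ * Θ t) i j = star (((Θ t)ᴴ * Θ t) j i) := fun t =>
        ((isHermitian_conjTranspose_mul_self (Θ t)).apply i j).symm
      simp only [hstar]
      rw [fourierCoeff_star, hanalytic (-l) (by lia), star_zero, Pi.single_eq_of_ne hl.ne']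
  simp only [← Matrix.ext_iff]
  rw [ae_all_iff]; intro i
  rw [ae_all_iff]; intro j
  exact ae_eq_of_fourierCoeff_eq (hΘ.conjTranspose.integrable_mul hΘ i j) (integrable_const _)
    (hcoeff i j)

/-- The columns of `Θ` are orthonormal vectors in the wandering subspace of the invariant subspace
generated by the columns of `a`; the columns of `bᴴ` show that it is large enough. -/
lemma exists_unitary_factor [Fintype n] [DecidableEq n] {a b : AddCircle T → Matrix n n ℂ}
    (ha : EntriesMemLp a 2 haarAddCircle) (hb : EntriesMemLp b 2 haarAddCircle)
    (hba : ∀ t, b t * a t = 1) :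
    ∃ Θ : AddCircle T → Matrix n n ℂ, EntriesMemLp Θ 2 haarAddCircle ∧
      (∀ᵐ t ∂haarAddCircle (T := T), (Θ t)ᴴ * Θ t = 1) ∧
      EntriesAnalytic (fun t => (Θ t)ᴴ * a t) ∧
      ∀ C : AddCircle T → Matrix m n ℂ, EntriesMemLp C 2 haarAddCircle →
        EntriesAnalytic (fun t => C t * a t) → EntriesAnalytic fun t => C t * Θ t := by
  set V := shift T (EuclideanSpace ℂ n) 2
  set M := invariantSpan V ha.column
  have hMV : M.map (V : _ →ₗ[ℂ] _) ≤ M := map_invariantSpan_le V _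
  have hbVM : ∀ i, hb.conjTranspose.column i ∈ (M.map (V : _ →ₗ[ℂ] _))ᗮ := fun i =>
    mem_orthogonal_map_invariantSpan_iff.mpr fun l j => by
      rw [inner_column_shift_pow]
      simp only [conjTranspose_conjTranspose, hba, fourierCoeff_const]
      exact Pi.single_eq_of_ne (by lia) _
  have hbiorth : ∀ i j, inner ℂ (hb.conjTranspose.column i) (ha.column j) =
      (1 : Matrix n n ℂ) i j := fun i j => by
    simpa [hba, fourierCoeff_const] using inner_column_shift_pow hb.conjTranspose ha 0 i j
  obtain ⟨θ, hθ, hmem⟩ := exists_orthonormal_of_biorthogonal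
    (Submodule.isClosed_topologicalClosure _) hMV (apply_mem_invariantSpan V _) hbVM hbiorth
  obtain ⟨Θ, hΘ, rfl⟩ := exists_column_eq θ
  refine ⟨Θ, hΘ, ae_conjTranspose_mul_self_eq_one hΘ hθ ?_, ?_, fun C hC hCa => ?_⟩
  · exact (entriesAnalytic_conjTranspose_mul_iff hΘ hΘ).mpr fun l i j =>
      inner_pow_succ_apply_eq_zero hMV (hmem i).2 (hmem j).1 l
  · exact (entriesAnalytic_conjTranspose_mul_iff hΘ ha).mpr fun l i j =>
      mem_orthogonal_map_invariantSpan_iff.mp (hmem i).2 l j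
  · have hCVM : ∀ i, hC.conjTranspose.column i ∈ (M.map (V : _ →ₗ[ℂ] _))ᗮ := fun i =>
      mem_orthogonal_map_invariantSpan_iff.mpr fun l j =>
        (entriesAnalytic_conjTranspose_mul_iff hC.conjTranspose ha).mp
          (by simpa only [conjTranspose_conjTranspose] using hCa) l i j
    simpa only [conjTranspose_conjTranspose] using
      (entriesAnalytic_conjTranspose_mul_iff hC.conjTranspose hΘ).mpr fun l i j =>
        inner_pow_succ_apply_eq_zero hMV (hCVM i) (hmem j).1 l

end Shift

section FunctionalCalculus

open scoped Matrix.Norms.L2Operator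

variable {m n k : Type*} [Fintype m] [Fintype n] [Fintype k] [DecidableEq n]

lemma continuous_cfc_conjTranspose_mul_self {c : ℝ → ℝ} (hc : Continuous c) :
    Continuous fun A : Matrix m n ℂ => cfc c (Aᴴ * A) :=
  Continuous.cfc_of_mem_nhdsSet (s := Set.univ) c Filter.univ_mem (by fun_prop)
    isHermitian_conjTranspose_mul_self hc.continuousOn

lemma isHermitian_cfc (c : ℝ → ℝ) (B : Matrix n n ℂ) : (cfc c B).IsHermitian :=
  cfc_predicate (R := ℝ) (p := IsSelfAdjoint) c B

lemma conjTranspose_cfc_sqrt_mul_cfc_sqrt {c : ℝ → ℝ} (hc : Continuous c) (hc0 : ∀ x, 0 ≤ c x)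
    (B : Matrix n n ℂ) : (cfc (fun x => √(c x)) B)ᴴ * cfc (fun x => √(c x)) B = cfc c B := by
  rw [(isHermitian_cfc _ B).eq, ← cfc_mul _ _ _ hc.sqrt.continuousOn hc.sqrt.continuousOn]
  simp only [Real.mul_self_sqrt (hc0 _)]

lemma conjTranspose_mul_cfc_sqrt_mul_self {c : ℝ → ℝ} (hc : Continuous c) (hc0 : ∀ x, 0 ≤ c x)
    (A : Matrix m n ℂ) :
    (A * cfc (fun x => √(c x)) (Aᴴ * A))ᴴ * (A * cfc (fun x => √(c x)) (Aᴴ * A)) =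
      cfc (fun x => x * c x) (Aᴴ * A) := by
  have hB : IsSelfAdjoint (Aᴴ * A) := isHermitian_conjTranspose_mul_self A
  have hid : Continuous fun x : ℝ => x := continuous_id
  set R := cfc (fun x => √(c x)) (Aᴴ * A) with hR
  have hRH : Rᴴ = R := isHermitian_cfc _ _
  calc (A * R)ᴴ * (A * R) = R * (cfc (fun x : ℝ => x) (Aᴴ * A) * R) := by
        rw [cfc_id' ℝ (Aᴴ * A), conjTranspose_mul, hRH]
        simp only [Matrix.mul_assoc]
    _ = cfc (fun x => √(c x) * (x * √(c x))) (Aᴴ * A) := by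
        rw [hR, ← cfc_mul _ _ _ hid.continuousOn hc.sqrt.continuousOn,
          ← cfc_mul _ (fun x => x * √(c x)) _ hc.sqrt.continuousOn (hid.mul hc.sqrt).continuousOn]
    _ = cfc (fun x => x * c x) (Aᴴ * A) := by
        simp only [mul_left_comm √_, Real.mul_self_sqrt (hc0 _)]

lemma cfc_sqrt_inv_mul_cfc_sqrt {c : ℝ → ℝ} (hc : Continuous c) (hc0 : ∀ x, 0 < c x)
    {B : Matrix n n ℂ} (hB : B.IsHermitian) :
    cfc (fun x => √(c x)⁻¹) B * cfc (fun x => √(c x)) B = 1 := by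
  have hcinv : Continuous fun x => (c x)⁻¹ := hc.inv₀ fun x => (hc0 x).ne'
  rw [← cfc_mul _ _ _ hcinv.sqrt.continuousOn hc.sqrt.continuousOn]
  simp only [← Real.sqrt_mul (inv_nonneg.mpr (hc0 _).le), inv_mul_cancel₀ (hc0 _).ne',
    Real.sqrt_one]
  exact cfc_const_one ℝ B hB

open scoped ComplexOrder in
lemma norm_cfc_conjTranspose_mul_self_le {c : ℝ → ℝ} {K : ℝ}
    (hc : ∀ x, 0 ≤ x → |c x| ≤ K + √x) (hK : 0 ≤ K) (A : Matrix m n ℂ) :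
    ‖cfc c (Aᴴ * A)‖ ≤ K + ‖A‖ := by
  refine norm_cfc_le (by positivity) fun x hx => ?_
  obtain ⟨i, hi⟩ : x ∈ Set.range (isHermitian_conjTranspose_mul_self A).eigenvalues := by
    rwa [← (isHermitian_conjTranspose_mul_self A).spectrum_real_eq_range_eigenvalues]
  have hx0 : 0 ≤ x := hi ▸ (posSemidef_conjTranspose_mul_self A).eigenvalues_nonneg i
  have hxA : x ≤ ‖A‖ ^ 2 := by
    have : Nonempty n := ⟨i⟩
    rw [pow_two, ← l2_opNorm_conjTranspose_mul_self]
    exact (le_abs_self x).trans (spectrum.norm_le_norm_of_mem hx)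
  exact (hc x hx0).trans (by gcongr; exact Real.sqrt_le_iff.mpr ⟨norm_nonneg A, hxA⟩)

lemma norm_entry_le_l2_opNorm (A : Matrix m n ℂ) (i : m) (j : n) : ‖A i j‖ ≤ ‖A‖ := by
  have h := l2_opNorm_mulVec A (EuclideanSpace.single j 1)
  rw [PiLp.norm_single, norm_one, mul_one] at h
  simpa using (PiLp.norm_apply_le _ i).trans h

variable {α : Type*} [MeasurableSpace α] {μ : Measure α}

lemma integrable_of_entries {f : α → Matrix m n ℂ}
    (hf : ∀ i j, Integrable (fun t => f t i j) μ) : Integrable f μ := by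
  classical
  have hsum : f = fun t => ∑ i, ∑ j, f t i j • Matrix.single i j (1 : ℂ) := by
    ext1 t
    simpa [Matrix.smul_single] using Matrix.matrix_eq_sum_single (f t)
  rw [hsum]
  exact integrable_finsetSum _ fun i _ => integrable_finsetSum _ fun j _ => (hf i j).smul_const _

lemma entriesMemLp_two_of_conjTranspose_mul_self_eq_cfc [IsFiniteMeasure μ] {f : α → Matrix m n ℂ}
    (hf : ∀ i j, Integrable (fun t => f t i j) μ) {D : Matrix m n ℂ → Matrix k n ℂ}
    (hD : Continuous D) {c : ℝ → ℝ} {K : ℝ} (hDc : ∀ A, (D A)ᴴ * D A = cfc c (Aᴴ * A))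
    (hc : ∀ x, 0 ≤ x → |c x| ≤ K + √x) : EntriesMemLp (fun t => D (f t)) 2 μ := by
  classical
  intro i j
  have hf' := integrable_of_entries hf
  have hmeas : AEStronglyMeasurable (fun t => D (f t) i j) μ :=
    (hD.matrix_elem i j).comp_aestronglyMeasurable hf'.1
  rw [memLp_two_iff_integrable_sq_norm hmeas]
  refine ((integrable_const K).add hf'.norm).mono' (hmeas.norm.pow 2) (.of_forall fun t => ?_)
  have hK : 0 ≤ K := by simpa using (abs_nonneg _).trans (hc 0 le_rfl)
  rw [Real.norm_of_nonneg (by positivity)]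
  calc ‖D (f t) i j‖ ^ 2 ≤ ‖D (f t)‖ ^ 2 := by gcongr; exact norm_entry_le_l2_opNorm _ i j
    _ = ‖cfc c ((f t)ᴴ * f t)‖ := by rw [← hDc, l2_opNorm_conjTranspose_mul_self, pow_two]
    _ ≤ K + ‖f t‖ := norm_cfc_conjTranspose_mul_self_le hc hK _

lemma entriesMemLp_two_cfc_sqrt [IsFiniteMeasure μ] {f : α → Matrix m n ℂ}
    (hf : ∀ i j, Integrable (fun t => f t i j) μ) {c : ℝ → ℝ} {K : ℝ} (hc : Continuous c)
    (hc0 : ∀ x, 0 ≤ c x) (hcK : ∀ x, 0 ≤ x → c x ≤ K + √x) :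
    EntriesMemLp (fun t => cfc (fun x => √(c x)) ((f t)ᴴ * f t)) 2 μ :=
  entriesMemLp_two_of_conjTranspose_mul_self_eq_cfc hf
    (continuous_cfc_conjTranspose_mul_self hc.sqrt)
    (fun _ => conjTranspose_cfc_sqrt_mul_cfc_sqrt hc hc0 _)
    fun x hx => (abs_of_nonneg (hc0 x)).trans_le (hcK x hx)

lemma entriesMemLp_two_mul_cfc_sqrt [IsFiniteMeasure μ] {f : α → Matrix m n ℂ}
    (hf : ∀ i j, Integrable (fun t => f t i j) μ) {c : ℝ → ℝ} {K : ℝ} (hc : Continuous c)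
    (hc0 : ∀ x, 0 ≤ c x) (hcK : ∀ x, 0 ≤ x → x * c x ≤ K + √x) :
    EntriesMemLp (fun t => f t * cfc (fun x => √(c x)) ((f t)ᴴ * f t)) 2 μ :=
  entriesMemLp_two_of_conjTranspose_mul_self_eq_cfc hf
    (continuous_id.matrix_mul (continuous_cfc_conjTranspose_mul_self hc.sqrt))
    (conjTranspose_mul_cfc_sqrt_mul_self hc hc0)
    fun x hx => (abs_of_nonneg (mul_nonneg hx (hc0 x))).trans_le (hcK x hx)

end FunctionalCalculus

section AnalyticFactorization

open AddCircle

variable {T : ℝ} [hT : Fact (0 < T)] {m n : Type*} [Fintype m] [Fintype n] [DecidableEq n]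

lemma div_le_sqrt_of_sqrt_le {x w : ℝ} (hx : 0 ≤ x) (hw : √x ≤ w) : x / w ≤ √x :=
  div_le_of_le_mul₀ ((Real.sqrt_nonneg x).trans hw) (Real.sqrt_nonneg x) <|
    calc x = √x * √x := (Real.mul_self_sqrt hx).symm
      _ ≤ √x * w := by gcongr

lemma exists_analytic_factorization_of_mul_eq_one {a b : AddCircle T → Matrix n n ℂ}
    {c : AddCircle T → Matrix m n ℂ} (ha : EntriesMemLp a 2 haarAddCircle)
    (hb : EntriesMemLp b 2 haarAddCircle) (hc : EntriesMemLp c 2 haarAddCircle)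
    (hba : ∀ t, b t * a t = 1) (hca : EntriesAnalytic fun t => c t * a t) :
    ∃ (g : AddCircle T → Matrix m n ℂ) (h : AddCircle T → Matrix n n ℂ),
      (∀ i j, Integrable (fun t => g t i j) haarAddCircle) ∧
      (∀ i j, Integrable (fun t => h t i j) haarAddCircle) ∧
      EntriesAnalytic g ∧ EntriesAnalytic h ∧
      ∀ᵐ t ∂haarAddCircle (T := T), c t * a t = g t * h t ∧ ∃ U : Matrix n n ℂ, Uᴴ * U = 1 ∧
        (g t)ᴴ * g t = Uᴴ * ((c t)ᴴ * c t) * U ∧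
        h t * (h t)ᴴ = Uᴴ * (a t * (a t)ᴴ) * U := by
  obtain ⟨Θ, hΘ, hΘ_unitary, hΘa, hcΘ⟩ := exists_unitary_factor (m := m) ha hb hba
  refine ⟨fun t => c t * Θ t, fun t => (Θ t)ᴴ * a t, hc.integrable_mul hΘ,
    hΘ.conjTranspose.integrable_mul ha, hcΘ c hc hca, hΘa, ?_⟩
  filter_upwards [hΘ_unitary] with t ht
  refine ⟨?_, Θ t, ht, ?_, ?_⟩
  · calc c t * a t = c t * (Θ t * (Θ t)ᴴ) * a t := by rw [mul_eq_one_comm.mp ht, Matrix.mul_one]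
      _ = c t * Θ t * ((Θ t)ᴴ * a t) := by simp only [Matrix.mul_assoc]
  · simp only [conjTranspose_mul, Matrix.mul_assoc]
  · simp only [conjTranspose_mul, conjTranspose_conjTranspose, Matrix.mul_assoc]

theorem exists_analytic_factorization {f : AddCircle T → Matrix m n ℂ}
    (hf_int : ∀ i j, Integrable (fun t => f t i j) haarAddCircle) (hf : EntriesAnalytic f)
    {w : ℝ → ℝ} {δ K : ℝ} (hw : Continuous w) (hδ : 0 < δ) (hδw : ∀ x, δ ≤ w x)
    (hw_ge : ∀ x, √x ≤ w x) (hw_le : ∀ x, w x ≤ K + √x) :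
    ∃ (g : AddCircle T → Matrix m n ℂ) (h : AddCircle T → Matrix n n ℂ),
      (∀ i j, Integrable (fun t => g t i j) haarAddCircle) ∧
      (∀ i j, Integrable (fun t => h t i j) haarAddCircle) ∧
      EntriesAnalytic g ∧ EntriesAnalytic h ∧
      ∀ᵐ t ∂haarAddCircle (T := T), f t = g t * h t ∧ ∃ U : Matrix n n ℂ, Uᴴ * U = 1 ∧
        (g t)ᴴ * g t = Uᴴ * cfc (fun x => x / w x) ((f t)ᴴ * f t) * U ∧
        h t * (h t)ᴴ = Uᴴ * cfc w ((f t)ᴴ * f t) * U := by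
  have hw0 (x) : 0 < w x := hδ.trans_le (hδw x)
  have hv : Continuous fun x => (w x)⁻¹ := hw.inv₀ fun x => (hw0 x).ne'
  have hv0 (x) : 0 ≤ (w x)⁻¹ := inv_nonneg.mpr (hw0 x).le
  have hv_le (x) (_ : 0 ≤ x) : (w x)⁻¹ ≤ δ⁻¹ + √x :=
    (inv_anti₀ hδ (hδw x)).trans (le_add_of_nonneg_right (Real.sqrt_nonneg x))
  have hxv_le (x) (hx : 0 ≤ x) : x * (w x)⁻¹ ≤ 0 + √x :=
    (div_le_sqrt_of_sqrt_le hx (hw_ge x)).trans_eq (zero_add _).symm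
  let a (t : AddCircle T) : Matrix n n ℂ := cfc (fun x => √(w x)) ((f t)ᴴ * f t)
  let b (t : AddCircle T) : Matrix n n ℂ := cfc (fun x => √(w x)⁻¹) ((f t)ᴴ * f t)
  have hba (t) : b t * a t = 1 :=
    cfc_sqrt_inv_mul_cfc_sqrt hw hw0 (isHermitian_conjTranspose_mul_self (f t))
  have hfba (t) : f t * b t * a t = f t := by rw [Matrix.mul_assoc, hba, Matrix.mul_one]
  have ha_sq (t) : a t * (a t)ᴴ = cfc w ((f t)ᴴ * f t) := by
    rw [(isHermitian_cfc _ _ : (a t).IsHermitian).eq,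
      ← conjTranspose_cfc_sqrt_mul_cfc_sqrt hw (fun x => (hw0 x).le), (isHermitian_cfc _ _).eq]
  have hfb_sq (t) : (f t * b t)ᴴ * (f t * b t) = cfc (fun x => x / w x) ((f t)ᴴ * f t) :=
    conjTranspose_mul_cfc_sqrt_mul_self hv hv0 (f t)
  have ha : EntriesMemLp a 2 haarAddCircle :=
    entriesMemLp_two_cfc_sqrt hf_int hw (fun x => (hw0 x).le) fun x _ => hw_le x
  have hb : EntriesMemLp b 2 haarAddCircle := entriesMemLp_two_cfc_sqrt hf_int hv hv0 hv_le
  have hfb : EntriesMemLp (fun t => f t * b t) 2 haarAddCircle :=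
    entriesMemLp_two_mul_cfc_sqrt hf_int hv hv0 hxv_le
  clear_value a b
  simpa only [hfba, ha_sq, hfb_sq] using
    exists_analytic_factorization_of_mul_eq_one ha hb hfb hba (by simpa only [hfba] using hf)

end AnalyticFactorization

section TracePhi

variable {Φ : ℝ → ℝ} {d : ℕ}

lemma trPhiHerm_conj_cfc (Φ c : ℝ → ℝ) {B U : Matrix (Fin d) (Fin d) ℂ} (hB : B.IsHermitian)
    (hU : Uᴴ * U = 1) : trPhiHerm Φ (Uᴴ * cfc c B * U) = ∑ i, Φ (c (hB.eigenvalues i)) := by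
  have hD : (Uᴴ * cfc c B * U).IsHermitian :=
    isHermitian_conjTranspose_mul_mul U (isHermitian_cfc c B)
  have hcharpoly : (Uᴴ * cfc c B * U).charpoly = (cfc c B).charpoly := by
    rw [Matrix.charpoly_mul_comm, ← Matrix.mul_assoc, mul_eq_one_comm.mp hU, one_mul]
  have hroots := hD.roots_charpoly_eq_eigenvalues
  rw [hcharpoly, hB.charpoly_cfc_eq, Polynomial.roots_prod _ _
    (by simp [Finset.prod_ne_zero_iff, Polynomial.X_sub_C_ne_zero])] at hroots
  simp only [Polynomial.roots_X_sub_C, Multiset.bind_singleton] at hroots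
  rw [trPhiHerm, dif_pos hD]
  simpa [Multiset.map_map, -Fin.univ_val_map] using
    (congrArg (fun s : Multiset ℂ => (s.map fun z => Φ z.re).sum) hroots).symm

open scoped ComplexOrder in
lemma trPhiHerm_conj_cfc_le {c : ℝ → ℝ} {η : ℝ} (hc : ∀ x, 0 ≤ x → Φ (c x) ≤ Φ √x + η)
    {U : Matrix (Fin d) (Fin d) ℂ} (hU : Uᴴ * U = 1) (A : Matrix (Fin d) (Fin d) ℂ) :
    trPhiHerm Φ (Uᴴ * cfc c (Aᴴ * A) * U) ≤ trPhiAbs Φ A + d * η := by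
  have hB := isHermitian_conjTranspose_mul_self A
  calc trPhiHerm Φ (Uᴴ * cfc c (Aᴴ * A) * U)
      = ∑ i, Φ (c (hB.eigenvalues i)) := trPhiHerm_conj_cfc Φ c hB hU
    _ ≤ ∑ i, (Φ √(hB.eigenvalues i) + η) := Finset.sum_le_sum fun i _ =>
        hc _ ((posSemidef_conjTranspose_mul_self A).eigenvalues_nonneg i)
    _ = trPhiAbs Φ A + d * η := by
        rw [trPhiAbs, trPhiSqrt, dif_pos hB, Finset.sum_add_distrib]
        simp

end TracePhi

lemma lintegral_ofReal_le_add {α : Type*} [MeasurableSpace α] {μ : Measure α}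
    [IsProbabilityMeasure μ] {u v : α → ℝ} {ε : ℝ} (h : ∀ᵐ t ∂μ, u t ≤ v t + ε) :
    ∫⁻ t, ENNReal.ofReal (u t) ∂μ ≤ ∫⁻ t, ENNReal.ofReal (v t) ∂μ + ENNReal.ofReal ε := by
  calc ∫⁻ t, ENNReal.ofReal (u t) ∂μ
      ≤ ∫⁻ t, (ENNReal.ofReal (v t) + ENNReal.ofReal ε) ∂μ := lintegral_mono_ae <| by
        filter_upwards [h] with t ht
        exact (ENNReal.ofReal_le_ofReal ht).trans ENNReal.ofReal_add_le
    _ = _ := by simp [lintegral_add_right]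

lemma exists_pos_mul_le {Φ : ℝ → ℝ} (hcont : ContinuousWithinAt Φ (Set.Ici 0) 0) (hzero : Φ 0 = 0)
    (C : ℝ) {ε : ℝ} (hε : 0 < ε) : ∃ δ, 0 < δ ∧ C * Φ δ ≤ ε := by
  have hlim := (hcont.mono Set.Ioi_subset_Ici_self).tendsto.const_mul C
  rw [hzero, mul_zero] at hlim
  obtain ⟨δ, hle, hpos⟩ := ((hlim.eventually_le_const hε).and self_mem_nhdsWithin).exists
  exact ⟨δ, hpos, hle⟩

open AddCircle in
theorem phi_moment_riesz_factorization_general {T : ℝ} [hT : Fact (0 < T)] {Φ : ℝ → ℝ}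
    (hmono : MonotoneOn Φ (Set.Ici 0)) (hcont : ContinuousWithinAt Φ (Set.Ici 0) 0)
    (hzero : Φ 0 = 0) {d : ℕ} {f : AddCircle T → Matrix (Fin d) (Fin d) ℂ}
    (hf_int : ∀ i j, Integrable (fun t => f t i j) haarAddCircle)
    (hf_analytic : ∀ k : ℤ, k < 0 → ∀ i j, fourierCoeff (fun t => f t i j) k = 0)
    {ε : ℝ} (hε : 0 < ε) :
    ∃ g h : AddCircle T → Matrix (Fin d) (Fin d) ℂ,
      (∀ i j, Integrable (fun t => g t i j) haarAddCircle) ∧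
      (∀ i j, Integrable (fun t => h t i j) haarAddCircle) ∧
      (∀ k : ℤ, k < 0 → ∀ i j, fourierCoeff (fun t => g t i j) k = 0) ∧
      (∀ k : ℤ, k < 0 → ∀ i j, fourierCoeff (fun t => h t i j) k = 0) ∧
      (∀ᵐ t ∂haarAddCircle (T := T), f t = g t * h t) ∧
      max (∫⁻ t, ENNReal.ofReal (trPhiHerm Φ ((g t)ᴴ * g t)) ∂haarAddCircle)
          (∫⁻ t, ENNReal.ofReal (trPhiHerm Φ (h t * (h t)ᴴ)) ∂haarAddCircle) ≤
        (∫⁻ t, ENNReal.ofReal (trPhiAbs Φ (f t)) ∂haarAddCircle) + ENNReal.ofReal ε := by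
  have hΦ_nonneg : ∀ x, 0 ≤ x → 0 ≤ Φ x := fun x hx =>
    hzero ▸ hmono Set.self_mem_Ici hx hx
  obtain ⟨δ, hδ, hδε⟩ := exists_pos_mul_le hcont hzero d hε
  have hw_pos : ∀ x, 0 < max √x δ := fun x => lt_max_of_lt_right hδ
  have hΦw : ∀ x, 0 ≤ x → Φ (max √x δ) ≤ Φ √x + Φ δ := fun x _ => by
    have := hΦ_nonneg √x (Real.sqrt_nonneg x)
    have := hΦ_nonneg δ hδ.le
    rcases max_choice √x δ with h | h <;> rw [h] <;> linarith
  have hΦdiv : ∀ x, 0 ≤ x → Φ (x / max √x δ) ≤ Φ √x + Φ δ := fun x hx => by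
    have hle : x / max √x δ ≤ √x := div_le_sqrt_of_sqrt_le hx (le_max_left _ _)
    linarith [hmono (div_nonneg hx (hw_pos x).le) (Real.sqrt_nonneg x) hle, hΦ_nonneg δ hδ.le]
  obtain ⟨g, h, hg, hh, hga, hha, hgh⟩ := exists_analytic_factorization hf_int hf_analytic
    (w := fun x => max √x δ) (K := δ) (by fun_prop) hδ (fun x => le_max_right _ _)
    (fun x => le_max_left _ _) (fun x => max_le (by linarith) (by linarith [Real.sqrt_nonneg x]))
  refine ⟨g, h, hg, hh, hga, hha, hgh.mono fun t ht => ht.1, max_le ?_ ?_⟩ <;>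
    refine lintegral_ofReal_le_add ?_
  · filter_upwards [hgh] with t ⟨_, U, hU, hgU, _⟩
    rw [hgU]
    exact (trPhiHerm_conj_cfc_le hΦdiv hU (f t)).trans (by gcongr)
  · filter_upwards [hgh] with t ⟨_, U, hU, _, hhU⟩
    rw [hhU]
    exact (trPhiHerm_conj_cfc_le hΦw hU (f t)).trans (by gcongr)

/-- Riesz-type factorization in matrix-valued Orlicz–Hardy spaces on the circle
(`𝕋 = ℝ / 2πℤ` with normalized Haar measure): if `f` is analytic (negative Fourier
coefficients vanish entrywise) and `∫ Tr Φ(|f|) dm < ∞`, then for every `ε > 0` there is a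
factorization `f = g h` a.e. with `g, h` analytic and
`max(∫ Tr Φ(g*g) dm, ∫ Tr Φ(h h*) dm) ≤ ∫ Tr Φ(|f|) dm + ε`. -/
theorem phi_moment_riesz_factorization
    (Φ : ℝ → ℝ) (hΦ : IsOrliczFunction Φ)
    (p q C₀ : ℝ) (hp : 1 < p) (hpq : p ≤ q) (hC₀ : 0 < C₀)
    (hlow : OrliczLowerIndex Φ p C₀) (hupp : OrliczUpperIndex Φ q C₀)
    (d : ℕ) (hd : 1 ≤ d)
    (f : AddCircle (2 * Real.pi) → Matrix (Fin d) (Fin d) ℂ)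
    (hf_int : ∀ i j, Integrable (fun t => f t i j) AddCircle.haarAddCircle)
    (hf_fin : (∫⁻ t, ENNReal.ofReal (trPhiAbs Φ (f t)) ∂AddCircle.haarAddCircle) < ⊤)
    (hf_analytic : ∀ k : ℤ, k < 0 → ∀ i j, fourierCoeff (fun t => f t i j) k = 0)
    (ε : ℝ) (hε : 0 < ε) :
    ∃ g h : AddCircle (2 * Real.pi) → Matrix (Fin d) (Fin d) ℂ,
      (∀ i j, Integrable (fun t => g t i j) AddCircle.haarAddCircle) ∧
      (∀ i j, Integrable (fun t => h t i j) AddCircle.haarAddCircle) ∧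
      (∀ k : ℤ, k < 0 → ∀ i j, fourierCoeff (fun t => g t i j) k = 0) ∧
      (∀ k : ℤ, k < 0 → ∀ i j, fourierCoeff (fun t => h t i j) k = 0) ∧
      (∀ᵐ t ∂(AddCircle.haarAddCircle (T := 2 * Real.pi)), f t = g t * h t) ∧
      max (∫⁻ t, ENNReal.ofReal (trPhiHerm Φ ((g t)ᴴ * g t)) ∂AddCircle.haarAddCircle)
          (∫⁻ t, ENNReal.ofReal (trPhiHerm Φ (h t * (h t)ᴴ)) ∂AddCircle.haarAddCircle) ≤
        (∫⁻ t, ENNReal.ofReal (trPhiAbs Φ (f t)) ∂AddCircle.haarAddCircle) +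
          ENNReal.ofReal ε :=
  phi_moment_riesz_factorization_general hΦ.monotoneOn (hΦ.continuousOn 0 Set.self_mem_Ici)
    hΦ.map_zero hf_int hf_analytic hε
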